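/- Let T be a triangulated category admitting a filtered enhancement (F, F(≤0), F(≥0), s, α), and let S be a full triangulated subcategory of T. Then the full subcategory G of F with objects { X ∈ F : s^{−n} grⁿ(X) ∈ S for all n ∈ ℤ } is a full triangulated subcategory of F closed under s and s^{−1}, and, equipped with G(≤0) := G ∩ F(≤0), G(≥0) := G ∩ F(≥0) and the restrictions of s and α, it is a filtered triangulated category with G(≤0) ∩ G(≥0) = S; that is, G is a filtered enhancement of S. -/

import Mathlib

open CategoryTheory Category Limits Pretriangulated
namespace Paper
universe v u

variable {𝓕 : Type u} [Category.{v} 𝓕] [HasZeroObject 𝓕] [Preadditive 𝓕]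
  [HasShift 𝓕 ℤ] [∀ n : ℤ, (shiftFunctor 𝓕 n).Additive] [Pretriangulated 𝓕]

/-- A strictly full triangulated subcategory, encoded as a set of objects. -/
structure IsTriangulatedSub (S : Set 𝓕) : Prop where
  zero : ∀ X : 𝓕, IsZero X → X ∈ S
  isoClosed : ∀ {X Y : 𝓕}, (X ≅ Y) → X ∈ S → Y ∈ S
  shift : ∀ (n : ℤ), ∀ X ∈ S, X⟦n⟧ ∈ S
  ext₂ : ∀ T ∈ distTriang 𝓕, T.obj₁ ∈ S → T.obj₃ ∈ S → T.obj₂ ∈ S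

/-- `F` is a triangulated (exact) functor with respect to the commutation-with-shift
data `cs`. -/
def IsTriangulatedWith {D : Type*} [Category D] [HasZeroObject D] [Preadditive D]
    [HasShift D ℤ] [∀ n : ℤ, (shiftFunctor D n).Additive] [Pretriangulated D]
    (F : 𝓕 ⥤ D) (cs : F.CommShift ℤ) : Prop := by
  letI := cs; exact F.IsTriangulated

/-- A filtered triangulated category structure (Beilinson) on the triangulated
category `𝓕`: subcategories `𝓕(≤n)` and `𝓕(≥n)`, an exact equivalence `s` with
`𝓕(≤n) = s^n 𝓕(≤0)`, `𝓕(≥n) = s^n 𝓕(≥0)`, a natural transformation `α : id ⟶ s`,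
and the axioms fcat1–fcat6. -/
structure FilteredTriangulated (𝓕 : Type u) [Category.{v} 𝓕] [HasZeroObject 𝓕]
    [Preadditive 𝓕] [HasShift 𝓕 ℤ] [∀ n : ℤ, (shiftFunctor 𝓕 n).Additive]
    [Pretriangulated 𝓕] where
  le : ℤ → Set 𝓕
  ge : ℤ → Set 𝓕
  sub_le : ∀ n : ℤ, IsTriangulatedSub (le n)
  sub_ge : ∀ n : ℤ, IsTriangulatedSub (ge n)
  s : 𝓕 ⥤ 𝓕
  s_comm : s.CommShift ℤ
  s_triang : IsTriangulatedWith s s_comm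
  s_equiv : s.IsEquivalence
  α : 𝟭 𝓕 ⟶ s
  s_le : ∀ (n : ℤ) (X : 𝓕), X ∈ le n ↔ s.obj X ∈ le (n+1)
  s_ge : ∀ (n : ℤ) (X : 𝓕), X ∈ ge n ↔ s.obj X ∈ ge (n+1)
  fcat1_le : le 0 ⊆ le 1
  fcat1_ge : ge 1 ⊆ ge 0
  fcat2_le : ∀ X : 𝓕, ∃ n : ℤ, X ∈ le n
  fcat2_ge : ∀ X : 𝓕, ∃ n : ℤ, X ∈ ge n
  fcat3 : ∀ X ∈ ge 1, ∀ Y ∈ le 0, ∀ f : X ⟶ Y, f = 0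
  fcat4 : ∀ X : 𝓕, ∃ (A B : 𝓕) (_ : A ∈ ge 1) (_ : B ∈ le 0) (f : A ⟶ X) (g : X ⟶ B)
    (h : B ⟶ A⟦(1:ℤ)⟧), Triangle.mk f g h ∈ distTriang 𝓕
  fcat5 : ∀ X : 𝓕, α.app (s.obj X) = s.map (α.app X)
  fcat6a : ∀ X : 𝓕, s.obj X ∈ ge 1 → ∀ Y ∈ le 0,
    Function.Bijective (fun f : Y ⟶ X => f ≫ α.app X)
  fcat6b : ∀ X ∈ ge 1, ∀ Y ∈ le 0,
    Function.Bijective (fun f : s.obj Y ⟶ X => α.app Y ≫ f)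

/-- `SPowRel s n X Y` means `Y ≅ s^n X` (for `n : ℕ`). -/
def SPowRel (s : 𝓕 ⥤ 𝓕) : ℕ → 𝓕 → 𝓕 → Prop
  | 0, X, Y => Nonempty (X ≅ Y)
  | (n+1), X, Y => ∃ Z : 𝓕, SPowRel s n X Z ∧ Nonempty (s.obj Z ≅ Y)

/-- `SPowRelZ s n X Y` means `Y ≅ s^n X` (for `n : ℤ`). -/
def SPowRelZ (s : 𝓕 ⥤ 𝓕) (n : ℤ) (X Y : 𝓕) : Prop :=
  if 0 ≤ n then SPowRel s n.toNat X Y else SPowRel s (-n).toNat Y X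

/-- `GrCond Ft S n X` expresses that `s^{-n} grⁿ(X)` lies in `S`, where
`grⁿ = σ_{≤n} ∘ σ_{≥n}` is computed via the truncation triangles
`σ_{≥n} X → X → σ_{≤n-1} X` and `σ_{≥n+1}(σ_{≥n} X) → σ_{≥n} X → σ_{≤n}(σ_{≥n} X)`. -/
def GrCond (Ft : FilteredTriangulated 𝓕) (S : Set 𝓕) (n : ℤ) (X : 𝓕) : Prop :=
  ∃ (A B A' G' : 𝓕) (f : A ⟶ X) (g : X ⟶ B) (h : B ⟶ A⟦(1:ℤ)⟧)
    (f' : A' ⟶ A) (g' : A ⟶ G') (h' : G' ⟶ A'⟦(1:ℤ)⟧),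
    A ∈ Ft.ge n ∧ B ∈ Ft.le (n-1) ∧ A' ∈ Ft.ge (n+1) ∧ G' ∈ Ft.le n ∧
    (Triangle.mk f g h ∈ distTriang 𝓕) ∧ (Triangle.mk f' g' h' ∈ distTriang 𝓕) ∧
    ∃ W ∈ S, SPowRelZ Ft.s n W G'

/-- `Dist A X B`: there is a distinguished triangle `A ⟶ X ⟶ B ⟶ A⟦1⟧`. -/
def Dist (A X B : 𝓕) : Prop :=
  ∃ (f : A ⟶ X) (g : X ⟶ B) (h : B ⟶ A⟦(1 : ℤ)⟧), Triangle.mk f g h ∈ distTriang 𝓕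

lemma Dist.of_mem {T : Triangle 𝓕} (hT : T ∈ distTriang 𝓕) : Dist T.obj₁ T.obj₂ T.obj₃ :=
  ⟨T.mor₁, T.mor₂, T.mor₃, hT⟩

lemma Dist.of_iso {A X B A' X' B' : 𝓕} (h : Dist A X B) (a : A ≅ A') (x : X ≅ X')
    (b : B ≅ B') : Dist A' X' B' := by
  obtain ⟨f, g, k, hT⟩ := h
  refine ⟨a.inv ≫ f ≫ x.hom, x.inv ≫ g ≫ b.hom, b.inv ≫ k ≫ a.hom⟦(1 : ℤ)⟧', ?_⟩
  refine isomorphic_distinguished _ hT _ (Triangle.isoMk _ _ a.symm x.symm b.symm ?_ ?_ ?_)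
  · change (a.inv ≫ f ≫ x.hom) ≫ x.inv = a.inv ≫ f
    simp only [assoc, Iso.hom_inv_id, comp_id]
  · change (x.inv ≫ g ≫ b.hom) ≫ b.inv = x.inv ≫ g
    simp only [assoc, Iso.hom_inv_id, comp_id]
  · change (b.inv ≫ k ≫ a.hom⟦(1 : ℤ)⟧') ≫ a.inv⟦(1 : ℤ)⟧' = b.inv ≫ k
    have e : a.hom⟦(1 : ℤ)⟧' ≫ a.inv⟦(1 : ℤ)⟧' = 𝟙 _ := by
      rw [← Functor.map_comp, a.hom_inv_id]
      exact (shiftFunctor 𝓕 (1 : ℤ)).map_id _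
    rw [assoc, assoc, e, comp_id]

lemma Dist.rotate {A X B : 𝓕} (h : Dist A X B) : Dist X B (A⟦(1 : ℤ)⟧) := by
  obtain ⟨f, g, k, hT⟩ := h
  exact Dist.of_mem (rot_of_distTriang _ hT)

lemma Dist.invRotate {A X B : 𝓕} (h : Dist A X B) : Dist (B⟦(-1 : ℤ)⟧) A X := by
  obtain ⟨f, g, k, hT⟩ := h
  exact Dist.of_mem (inv_rot_of_distTriang _ hT)

lemma Dist.shift {A X B : 𝓕} (h : Dist A X B) (n : ℤ) : Dist (A⟦n⟧) (X⟦n⟧) (B⟦n⟧) := by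
  obtain ⟨f, g, k, hT⟩ := h
  exact Dist.of_mem (Triangle.shift_distinguished _ hT n)

lemma Dist.id_left {X Z : 𝓕} (hZ : IsZero Z) : Dist X X Z :=
  (Dist.of_mem (contractible_distinguished X)).of_iso (Iso.refl _) (Iso.refl _)
    ((isZero_zero 𝓕).iso hZ)

lemma Dist.id_right {X Z : 𝓕} (hZ : IsZero Z) : Dist Z X X :=
  (Dist.of_mem (contractible_distinguished₁ X)).of_iso ((isZero_zero 𝓕).iso hZ)
    (Iso.refl _) (Iso.refl _)

lemma Dist.iso_right {Z X Y : 𝓕} (h : Dist Z X Y) (hZ : IsZero Z) : Nonempty (X ≅ Y) := by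
  obtain ⟨f, g, k, hT⟩ := h
  have : IsIso g := (Triangle.isZero₁_iff_isIso₂ _ hT).1 hZ
  exact ⟨asIso g⟩

lemma Dist.iso_left {X Y Z : 𝓕} (h : Dist X Y Z) (hZ : IsZero Z) : Nonempty (X ≅ Y) := by
  obtain ⟨f, g, k, hT⟩ := h
  have : IsIso f := (Triangle.isZero₃_iff_isIso₁ _ hT).1 hZ
  exact ⟨asIso f⟩

namespace IsTriangulatedSub

variable {P : Set 𝓕} (hP : IsTriangulatedSub P)

lemma mem₂ (hP : IsTriangulatedSub P) {A X B : 𝓕} (h : Dist A X B) (hA : A ∈ P) (hB : B ∈ P) :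
    X ∈ P := by
  obtain ⟨f, g, k, hT⟩ := h
  exact hP.ext₂ _ hT hA hB

lemma mem₃ (hP : IsTriangulatedSub P) {A X B : 𝓕} (h : Dist A X B) (hA : A ∈ P) (hX : X ∈ P) :
    B ∈ P :=
  hP.mem₂ h.rotate hX (hP.shift 1 _ hA)

end IsTriangulatedSub

section Orthogonal

variable {P Q : Set 𝓕}

lemma left_inj (hQ : IsTriangulatedSub Q)
    (h0 : ∀ X ∈ P, ∀ Y ∈ Q, ∀ f : X ⟶ Y, f = 0) {T : Triangle 𝓕} (hT : T ∈ distTriang 𝓕)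
    (h3 : T.obj₃ ∈ Q) {K : 𝓕} (hK : K ∈ P) (k : K ⟶ T.obj₁) (hk : k ≫ T.mor₁ = 0) : k = 0 := by
  obtain ⟨g, hg⟩ := Triangle.coyoneda_exact₂ _ (inv_rot_of_distTriang _ hT) k hk
  have : g = 0 := h0 _ hK _ (hQ.shift (-1) _ h3) g
  rw [hg, this]
  exact zero_comp

lemma left_surj (h0 : ∀ X ∈ P, ∀ Y ∈ Q, ∀ f : X ⟶ Y, f = 0) {T : Triangle 𝓕}
    (hT : T ∈ distTriang 𝓕)
    (h3 : T.obj₃ ∈ Q) {K : 𝓕} (hK : K ∈ P) (k : K ⟶ T.obj₂) : ∃ l : K ⟶ T.obj₁, k = l ≫ T.mor₁ :=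
  Triangle.coyoneda_exact₂ _ hT k (h0 _ hK _ h3 _)

lemma right_inj (hP : IsTriangulatedSub P)
    (h0 : ∀ X ∈ P, ∀ Y ∈ Q, ∀ f : X ⟶ Y, f = 0) {T : Triangle 𝓕} (hT : T ∈ distTriang 𝓕)
    (h1 : T.obj₁ ∈ P) {K : 𝓕} (hK : K ∈ Q) (k : T.obj₃ ⟶ K) (hk : T.mor₂ ≫ k = 0) : k = 0 := by
  obtain ⟨g, hg⟩ := Triangle.yoneda_exact₃ _ hT k hk
  have : g = 0 := h0 _ (hP.shift 1 _ h1) _ hK g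
  rw [hg, this, comp_zero]

lemma right_surj (h0 : ∀ X ∈ P, ∀ Y ∈ Q, ∀ f : X ⟶ Y, f = 0) {T : Triangle 𝓕}
    (hT : T ∈ distTriang 𝓕)
    (h1 : T.obj₁ ∈ P) {K : 𝓕} (hK : K ∈ Q) (k : T.obj₂ ⟶ K) : ∃ l : T.obj₃ ⟶ K, k = T.mor₂ ≫ l :=
  Triangle.yoneda_exact₂ _ hT k (h0 _ h1 _ hK _)

lemma rot3 {T : Triangle 𝓕} (hT : T ∈ distTriang 𝓕) :
    Triangle.mk (-T.mor₁⟦(1 : ℤ)⟧') (-T.mor₂⟦(1 : ℤ)⟧') (-T.mor₃⟦(1 : ℤ)⟧') ∈ distTriang 𝓕 :=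
  rot_of_distTriang _ (rot_of_distTriang _ (rot_of_distTriang _ hT))

/-- Right truncation (coreflection) is exact. -/
lemma trunc_left (hP : IsTriangulatedSub P) (hQ : IsTriangulatedSub Q)
    (h0 : ∀ X ∈ P, ∀ Y ∈ Q, ∀ f : X ⟶ Y, f = 0)
    {X₁ X₂ X₃ A₁ A₂ A₃ B₁ B₂ B₃ : 𝓕} (hX : Dist X₁ X₂ X₃)
    (h₁ : Dist A₁ X₁ B₁) (h₂ : Dist A₂ X₂ B₂) (h₃ : Dist A₃ X₃ B₃)
    (hA₁ : A₁ ∈ P) (hA₂ : A₂ ∈ P) (hA₃ : A₃ ∈ P) (hB₁ : B₁ ∈ Q) (hB₂ : B₂ ∈ Q) (hB₃ : B₃ ∈ Q) :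
    Dist A₁ A₂ A₃ := by
  obtain ⟨u, v, w, hT⟩ := hX
  obtain ⟨a₁, b₁, d₁, hT₁⟩ := h₁
  obtain ⟨a₂, b₂, d₂, hT₂⟩ := h₂
  obtain ⟨a₃, b₃, d₃, hT₃⟩ := h₃
  obtain ⟨u', hu'⟩ : ∃ u' : A₁ ⟶ A₂, a₁ ≫ u = u' ≫ a₂ := left_surj h0 hT₂ hB₂ hA₁ (a₁ ≫ u)
  obtain ⟨C, g, h, hC⟩ := distinguished_cocone_triangle u'
  have hCP : C ∈ P := hP.mem₃ (Dist.of_mem hC) hA₁ hA₂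
  obtain ⟨c, hc₁, hc₂⟩ : ∃ c : C ⟶ X₃, g ≫ c = a₂ ≫ v ∧ h ≫ a₁⟦(1 : ℤ)⟧' = c ≫ w :=
    complete_distinguished_triangle_morphism _ _ hC hT a₁ a₂ hu'.symm
  have inj : ∀ {K : 𝓕} (_ : K ∈ P) (k : K ⟶ C), k ≫ c = 0 → k = 0 := by
    intro K hK k hk
    have e1 : k ≫ h = 0 := by
      refine left_inj hQ h0 (rot3 hT₁) (hQ.shift 1 _ hB₁) hK _ ?_
      change (k ≫ h) ≫ (-a₁⟦(1 : ℤ)⟧') = 0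
      rw [Preadditive.comp_neg, assoc, hc₂, ← assoc, hk, zero_comp, neg_zero]
    obtain ⟨l, hl⟩ : ∃ l : K ⟶ A₂, k = l ≫ g := Triangle.coyoneda_exact₃ _ hC k e1
    obtain ⟨m, hm⟩ : ∃ m : K ⟶ X₁, l ≫ a₂ = m ≫ u := by
      refine Triangle.coyoneda_exact₂ _ hT (l ≫ a₂) ?_
      change (l ≫ a₂) ≫ v = 0
      rw [assoc, ← hc₁, ← assoc, ← hl, hk]
    obtain ⟨m', hm'⟩ : ∃ m' : K ⟶ A₁, m = m' ≫ a₁ := left_surj h0 hT₁ hB₁ hK m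
    have e2 : l - m' ≫ u' = 0 := by
      refine left_inj hQ h0 hT₂ hB₂ hK _ ?_
      change (l - m' ≫ u') ≫ a₂ = 0
      rw [Preadditive.sub_comp, assoc, ← hu', hm, hm', assoc, sub_self]
    have e3 : u' ≫ g = 0 := comp_distTriang_mor_zero₁₂ _ hC
    rw [hl, sub_eq_zero.1 e2, assoc, e3, comp_zero]
  have surj : ∀ {K : 𝓕} (_ : K ∈ P) (k : K ⟶ X₃), ∃ q : K ⟶ C, k = q ≫ c := by
    intro K hK k
    obtain ⟨p, hp⟩ : ∃ p : K ⟶ A₁⟦(1 : ℤ)⟧, k ≫ w = p ≫ (-a₁⟦(1 : ℤ)⟧') :=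
      left_surj h0 (rot3 hT₁) (hQ.shift 1 _ hB₁) hK (k ≫ w)
    have e0 : w ≫ u⟦(1 : ℤ)⟧' = 0 := comp_distTriang_mor_zero₃₁ _ hT
    have e1 : p ≫ u'⟦(1 : ℤ)⟧' = 0 := by
      refine left_inj hQ h0 (rot3 hT₂) (hQ.shift 1 _ hB₂) hK _ ?_
      change (p ≫ u'⟦(1 : ℤ)⟧') ≫ (-a₂⟦(1 : ℤ)⟧') = 0
      rw [Preadditive.comp_neg, assoc, ← Functor.map_comp, ← hu', Functor.map_comp,
        ← assoc, ← Preadditive.neg_comp, ← Preadditive.comp_neg, ← hp, assoc, e0, comp_zero]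
    obtain ⟨q, hq⟩ : ∃ q : K ⟶ C, p = q ≫ h := Triangle.coyoneda_exact₁ _ hC p e1
    obtain ⟨r, hr⟩ : ∃ r : K ⟶ X₂, k + q ≫ c = r ≫ v := by
      refine Triangle.coyoneda_exact₃ _ hT (k + q ≫ c) ?_
      change (k + q ≫ c) ≫ w = 0
      rw [Preadditive.add_comp, hp, hq, assoc, assoc, ← hc₂]
      simp
    obtain ⟨r', hr'⟩ : ∃ r' : K ⟶ A₂, r = r' ≫ a₂ := left_surj h0 hT₂ hB₂ hK r
    refine ⟨r' ≫ g - q, ?_⟩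
    rw [Preadditive.sub_comp, assoc, hc₁, ← assoc, ← hr', ← hr, add_sub_cancel_right]
  obtain ⟨c', hc'⟩ : ∃ c' : C ⟶ A₃, c = c' ≫ a₃ := left_surj h0 hT₃ hB₃ hCP c
  obtain ⟨i, hi⟩ := surj hA₃ a₃
  have i1 : i ≫ c' - 𝟙 _ = 0 := by
    refine left_inj hQ h0 hT₃ hB₃ hA₃ _ ?_
    change (i ≫ c' - 𝟙 _) ≫ a₃ = 0
    rw [Preadditive.sub_comp, assoc, ← hc', ← hi, id_comp, sub_self]
  have i2 : c' ≫ i - 𝟙 _ = 0 := by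
    refine inj hCP _ ?_
    rw [Preadditive.sub_comp, assoc, ← hi, ← hc', id_comp, sub_self]
  exact (Dist.of_mem hC).of_iso (Iso.refl _) (Iso.refl _)
    ⟨c', i, sub_eq_zero.1 i2, sub_eq_zero.1 i1⟩

/-- Left truncation (reflection) is exact. -/
lemma trunc_right (hP : IsTriangulatedSub P) (hQ : IsTriangulatedSub Q)
    (h0 : ∀ X ∈ P, ∀ Y ∈ Q, ∀ f : X ⟶ Y, f = 0)
    {X₁ X₂ X₃ A₁ A₂ A₃ B₁ B₂ B₃ : 𝓕} (hX : Dist X₁ X₂ X₃)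
    (h₁ : Dist A₁ X₁ B₁) (h₂ : Dist A₂ X₂ B₂) (h₃ : Dist A₃ X₃ B₃)
    (hA₁ : A₁ ∈ P) (hA₂ : A₂ ∈ P) (hA₃ : A₃ ∈ P) (hB₁ : B₁ ∈ Q) (hB₂ : B₂ ∈ Q) (hB₃ : B₃ ∈ Q) :
    Dist B₁ B₂ B₃ := by
  obtain ⟨u, v, w, hT⟩ := hX
  obtain ⟨a₁, b₁, d₁, hT₁⟩ := h₁
  obtain ⟨a₂, b₂, d₂, hT₂⟩ := h₂
  obtain ⟨a₃, b₃, d₃, hT₃⟩ := h₃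
  obtain ⟨u', hu'⟩ : ∃ u' : B₁ ⟶ B₂, u ≫ b₂ = b₁ ≫ u' := right_surj h0 hT₁ hA₁ hB₂ (u ≫ b₂)
  obtain ⟨C, g, h, hC⟩ := distinguished_cocone_triangle u'
  have hCQ : C ∈ Q := hQ.mem₃ (Dist.of_mem hC) hB₁ hB₂
  obtain ⟨c, hc₁, hc₂⟩ : ∃ c : X₃ ⟶ C, v ≫ c = b₂ ≫ g ∧ w ≫ b₁⟦(1 : ℤ)⟧' = c ≫ h :=
    complete_distinguished_triangle_morphism _ _ hT hC b₁ b₂ hu'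
  have inj : ∀ {K : 𝓕} (_ : K ∈ Q) (k : C ⟶ K), c ≫ k = 0 → k = 0 := by
    intro K hK k hk
    have e1 : g ≫ k = 0 := by
      refine right_inj hP h0 hT₂ hA₂ hK _ ?_
      change b₂ ≫ g ≫ k = 0
      rw [← assoc, ← hc₁, assoc, hk, comp_zero]
    obtain ⟨l, hl⟩ : ∃ l : B₁⟦(1 : ℤ)⟧ ⟶ K, k = h ≫ l := Triangle.yoneda_exact₃ _ hC k e1
    obtain ⟨m, hm⟩ : ∃ m : X₂⟦(1 : ℤ)⟧ ⟶ K, b₁⟦(1 : ℤ)⟧' ≫ l = (-u⟦(1 : ℤ)⟧') ≫ m := by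
      refine Triangle.yoneda_exact₃ _ (rot_of_distTriang _ hT) (b₁⟦(1 : ℤ)⟧' ≫ l) ?_
      change w ≫ b₁⟦(1 : ℤ)⟧' ≫ l = 0
      rw [← assoc, hc₂, assoc, ← hl, hk]
    obtain ⟨m', hm'⟩ : ∃ m' : B₂⟦(1 : ℤ)⟧ ⟶ K, m = (-b₂⟦(1 : ℤ)⟧') ≫ m' :=
      right_surj h0 (rot3 hT₂) (hP.shift 1 _ hA₂) hK m
    have e2 : l - u'⟦(1 : ℤ)⟧' ≫ m' = 0 := by
      refine right_inj hP h0 (rot3 hT₁) (hP.shift 1 _ hA₁) hK _ ?_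
      change (-b₁⟦(1 : ℤ)⟧') ≫ (l - u'⟦(1 : ℤ)⟧' ≫ m') = 0
      rw [Preadditive.neg_comp, Preadditive.comp_sub, hm, hm', ← assoc (b₁⟦(1 : ℤ)⟧'),
        ← Functor.map_comp, ← hu', Functor.map_comp]
      simp
    have e3 : h ≫ u'⟦(1 : ℤ)⟧' = 0 := comp_distTriang_mor_zero₃₁ _ hC
    rw [hl, sub_eq_zero.1 e2, ← assoc, e3, zero_comp]
  have surj : ∀ {K : 𝓕} (_ : K ∈ Q) (k : X₃ ⟶ K), ∃ q : C ⟶ K, k = c ≫ q := by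
    intro K hK k
    obtain ⟨p, hp⟩ : ∃ p : B₂ ⟶ K, v ≫ k = b₂ ≫ p :=
      right_surj h0 hT₂ hA₂ hK (v ≫ k)
    have e0 : u ≫ v = 0 := comp_distTriang_mor_zero₁₂ _ hT
    have e1 : u' ≫ p = 0 := by
      refine right_inj hP h0 hT₁ hA₁ hK _ ?_
      change b₁ ≫ u' ≫ p = 0
      rw [← assoc, ← hu', assoc, ← hp, ← assoc, e0, zero_comp]
    obtain ⟨q, hq⟩ : ∃ q : C ⟶ K, p = g ≫ q := Triangle.yoneda_exact₂ _ hC p e1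
    obtain ⟨r, hr⟩ : ∃ r : X₁⟦(1 : ℤ)⟧ ⟶ K, k - c ≫ q = w ≫ r := by
      refine Triangle.yoneda_exact₃ _ hT (k - c ≫ q) ?_
      change v ≫ (k - c ≫ q) = 0
      rw [Preadditive.comp_sub, hp, hq, ← assoc, ← assoc, hc₁, sub_self]
    obtain ⟨r', hr'⟩ : ∃ r' : B₁⟦(1 : ℤ)⟧ ⟶ K, r = (-b₁⟦(1 : ℤ)⟧') ≫ r' :=
      right_surj h0 (rot3 hT₁) (hP.shift 1 _ hA₁) hK r
    refine ⟨q - h ≫ r', ?_⟩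
    rw [Preadditive.comp_sub, ← assoc c h, ← hc₂, ← sub_eq_zero, sub_sub_eq_add_sub,
      add_sub_right_comm, hr, hr']
    simp
  obtain ⟨c', hc'⟩ : ∃ c' : B₃ ⟶ C, c = b₃ ≫ c' := right_surj h0 hT₃ hA₃ hCQ c
  obtain ⟨i, hi⟩ := surj hB₃ b₃
  have i1 : c' ≫ i - 𝟙 _ = 0 := by
    refine right_inj hP h0 hT₃ hA₃ hB₃ _ ?_
    change b₃ ≫ (c' ≫ i - 𝟙 _) = 0
    rw [Preadditive.comp_sub, ← assoc, ← hc', ← hi, comp_id, sub_self]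
  have i2 : i ≫ c' - 𝟙 _ = 0 := by
    refine inj hCQ _ ?_
    rw [Preadditive.comp_sub, ← assoc, ← hi, ← hc', comp_id, sub_self]
  exact (Dist.of_mem hC).of_iso (Iso.refl _) (Iso.refl _)
    ⟨i, c', sub_eq_zero.1 i2, sub_eq_zero.1 i1⟩

end Orthogonal

section SPow

lemma sPowRel_iff (s : 𝓕 ⥤ 𝓕) (m : ℕ) (X Y : 𝓕) :
    SPowRel s m X Y ↔ Nonempty ((s.obj)^[m] X ≅ Y) := by
  induction m generalizing Y with
  | zero => exact Iff.rfl
  | succ m ih =>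
    rw [Function.iterate_succ_apply']
    constructor
    · rintro ⟨Z, hZ, ⟨e⟩⟩
      obtain ⟨e'⟩ := (ih Z).1 hZ
      exact ⟨s.mapIso e' ≪≫ e⟩
    · rintro ⟨e⟩
      exact ⟨_, (ih _).2 ⟨Iso.refl _⟩, ⟨e⟩⟩

/-- The set of objects of the form `s^n W` with `W ∈ S`. -/
def SS (s : 𝓕 ⥤ 𝓕) (S : Set 𝓕) (n : ℤ) : Set 𝓕 := {G | ∃ W ∈ S, SPowRelZ s n W G}

variable {S : Set 𝓕} {s : 𝓕 ⥤ 𝓕}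

lemma mem_SS_nat (m : ℕ) (G : 𝓕) :
    G ∈ SS s S (m : ℤ) ↔ ∃ W ∈ S, Nonempty ((s.obj)^[m] W ≅ G) := by
  simp only [SS, SPowRelZ, Set.mem_ofPred_eq, Int.natCast_nonneg, if_true, Int.toNat_natCast,
    sPowRel_iff]

lemma mem_SS_neg (hS : IsTriangulatedSub S) (m : ℕ) (G : 𝓕) :
    G ∈ SS s S (-(m : ℤ)) ↔ (s.obj)^[m] G ∈ S := by
  rcases m with _ | m
  · have := mem_SS_nat (s := s) (S := S) 0 G
    simp only [Nat.cast_zero, neg_zero, Function.iterate_zero, id] at this ⊢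
    rw [this]
    exact ⟨fun ⟨W, hW, ⟨e⟩⟩ => hS.isoClosed e hW, fun h => ⟨G, h, ⟨Iso.refl _⟩⟩⟩
  · have h1 : ¬ (0 ≤ -((m + 1 : ℕ) : ℤ)) := by omega
    simp only [SS, SPowRelZ, Set.mem_ofPred_eq, h1, if_false, neg_neg, Int.toNat_natCast,
      sPowRel_iff]
    exact ⟨fun ⟨W, hW, ⟨e⟩⟩ => hS.isoClosed e.symm hW, fun h => ⟨_, h, ⟨Iso.refl _⟩⟩⟩

lemma mem_SS_zero (hS : IsTriangulatedSub S) (G : 𝓕) : G ∈ SS s S 0 ↔ G ∈ S := by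
  simpa using mem_SS_neg (s := s) hS 0 G

lemma mem_SS_succ [s.IsEquivalence] (hS : IsTriangulatedSub S) (n : ℤ) (G : 𝓕) :
    G ∈ SS s S n ↔ s.obj G ∈ SS s S (n + 1) := by
  obtain ⟨m, rfl | hm⟩ : ∃ m : ℕ, n = m ∨ n = -((m + 1 : ℕ) : ℤ) := by
    rcases le_or_gt 0 n with h | h
    · exact ⟨n.toNat, Or.inl (by omega)⟩
    · exact ⟨(-n - 1).toNat, Or.inr (by omega)⟩
  · rw [mem_SS_nat, show ((m : ℤ) + 1) = ((m + 1 : ℕ) : ℤ) by simp, mem_SS_nat]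
    simp only [Function.iterate_succ_apply']
    exact ⟨fun ⟨W, hW, ⟨e⟩⟩ => ⟨W, hW, ⟨s.mapIso e⟩⟩,
      fun ⟨W, hW, ⟨e⟩⟩ => ⟨W, hW, ⟨s.preimageIso e⟩⟩⟩
  · rw [show n + 1 = -(m : ℤ) by omega, hm, mem_SS_neg hS, mem_SS_neg hS,
      Function.iterate_succ_apply]

end SPow

lemma int_iff {p : ℤ → Prop} (h0 : p 0) (h : ∀ n, p n ↔ p (n + 1)) : ∀ n, p n := by
  intro n
  induction n using Int.induction_on with
  | zero => exact h0
  | succ n ih => exact (h _).1 ih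
  | pred n ih => exact (h _).2 (by simpa using ih)

section Equiv

variable (s : 𝓕 ⥤ 𝓕) [s.CommShift ℤ] [s.IsTriangulated] [s.IsEquivalence]

lemma Dist.map {A X B : 𝓕} (h : Dist A X B) : Dist (s.obj A) (s.obj X) (s.obj B) := by
  obtain ⟨f, g, k, hT⟩ := h
  exact Dist.of_mem (s.map_distinguished _ hT)

lemma Dist.of_map {A X B : 𝓕} (h : Dist (s.obj A) (s.obj X) (s.obj B)) : Dist A X B := by
  obtain ⟨f, g, k, hT⟩ := h
  obtain ⟨T', hT', ⟨e⟩⟩ := s.mem_mapTriangle_essImage_of_distinguished _ hT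
  exact (Dist.of_mem hT').of_iso (s.preimageIso (Triangle.π₁.mapIso e))
    (s.preimageIso (Triangle.π₂.mapIso e)) (s.preimageIso (Triangle.π₃.mapIso e))

lemma isTriangulatedSub_iff {P Q : Set 𝓕} (hPi : ∀ {X Y : 𝓕}, (X ≅ Y) → X ∈ P → Y ∈ P)
    (hQi : ∀ {X Y : 𝓕}, (X ≅ Y) → X ∈ Q → Y ∈ Q)
    (h : ∀ X, X ∈ P ↔ s.obj X ∈ Q) : IsTriangulatedSub P ↔ IsTriangulatedSub Q := by
  constructor
  · intro hP
    have key : ∀ Y, Y ∈ Q ↔ s.objPreimage Y ∈ P := fun Y => by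
      rw [h]
      exact ⟨hQi (s.objObjPreimageIso Y).symm, hQi (s.objObjPreimageIso Y)⟩
    refine ⟨?_, hQi, ?_, ?_⟩
    · intro X hX
      obtain ⟨Z, hZ⟩ : ∃ Z : 𝓕, IsZero Z := ⟨_, isZero_zero 𝓕⟩
      exact hQi ((s.map_isZero hZ).iso hX) ((h Z).1 (hP.zero Z hZ))
    · intro n X hX
      have h1 := (h _).1 (hP.shift n _ ((key X).1 hX))
      exact hQi ((s.commShiftIso n).app _ ≪≫
        (shiftFunctor 𝓕 n).mapIso (s.objObjPreimageIso X)) h1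
    · intro T hT h1 h3
      have hD : Dist (s.objPreimage T.obj₁) (s.objPreimage T.obj₂) (s.objPreimage T.obj₃) :=
        Dist.of_map s ((Dist.of_mem hT).of_iso (s.objObjPreimageIso _).symm
          (s.objObjPreimageIso _).symm (s.objObjPreimageIso _).symm)
      exact (key _).2 (hP.mem₂ hD ((key _).1 h1) ((key _).1 h3))
  · intro hQ
    refine ⟨?_, hPi, ?_, ?_⟩
    · intro X hX
      exact (h X).2 (hQ.zero _ (s.map_isZero hX))
    · intro n X hX
      exact (h _).2 (hQi ((s.commShiftIso n).app _).symm (hQ.shift n _ ((h X).1 hX)))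
    · intro T hT h1 h3
      exact (h _).2 (hQ.mem₂ ((Dist.of_mem hT).map s) ((h _).1 h1) ((h _).1 h3))

lemma SS_isTriangulatedSub {S : Set 𝓕} (hS : IsTriangulatedSub S) (n : ℤ) :
    IsTriangulatedSub (SS s S n) := by
  have hi : ∀ (n : ℤ) {X Y : 𝓕}, (X ≅ Y) → X ∈ SS s S n → Y ∈ SS s S n := by
    intro n X Y e hX
    rcases le_or_gt 0 n with h | h
    · obtain ⟨m, rfl⟩ := Int.eq_ofNat_of_zero_le h
      rw [mem_SS_nat] at hX ⊢
      obtain ⟨W, hW, ⟨e'⟩⟩ := hX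
      exact ⟨W, hW, ⟨e' ≪≫ e⟩⟩
    · obtain ⟨m, hm⟩ := Int.eq_ofNat_of_zero_le (show 0 ≤ -n by omega)
      obtain rfl : n = -(m : ℤ) := by omega
      rw [mem_SS_neg hS] at hX ⊢
      refine hS.isoClosed (Nonempty.some ?_) hX
      clear hm h hX
      induction m with
      | zero => exact ⟨e⟩
      | succ m ih =>
        rw [Function.iterate_succ_apply', Function.iterate_succ_apply']
        exact ⟨s.mapIso ih.some⟩
  refine int_iff (p := fun n => IsTriangulatedSub (SS s S n)) ?_ ?_ n
  · have : SS s S 0 = S := by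
      ext G
      exact mem_SS_zero hS G
    rw [this]
    exact hS
  · intro n
    exact isTriangulatedSub_iff s (hi n) (hi (n + 1)) (mem_SS_succ hS n)

end Equiv

namespace FilteredTriangulated

variable (Ft : FilteredTriangulated 𝓕)

lemma dist_map {A X B : 𝓕} (h : Dist A X B) :
    Dist (Ft.s.obj A) (Ft.s.obj X) (Ft.s.obj B) := by
  let := Ft.s_comm
  have : Ft.s.IsTriangulated := Ft.s_triang
  have := Ft.s_equiv
  exact h.map Ft.s

lemma dist_of_map {A X B : 𝓕} (h : Dist (Ft.s.obj A) (Ft.s.obj X) (Ft.s.obj B)) :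
    Dist A X B := by
  let := Ft.s_comm
  have : Ft.s.IsTriangulated := Ft.s_triang
  have := Ft.s_equiv
  exact h.of_map Ft.s

lemma exists_iso (X : 𝓕) : ∃ X₀ : 𝓕, Nonempty (Ft.s.obj X₀ ≅ X) := by
  have := Ft.s_equiv
  exact ⟨_, ⟨Ft.s.objObjPreimageIso X⟩⟩

lemma exists_le (n : ℤ) {X : 𝓕} (hX : X ∈ Ft.le (n + 1)) :
    ∃ X₀ ∈ Ft.le n, Nonempty (Ft.s.obj X₀ ≅ X) := by
  obtain ⟨X₀, ⟨e⟩⟩ := Ft.exists_iso X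
  exact ⟨X₀, (Ft.s_le _ _).2 ((Ft.sub_le _).isoClosed e.symm hX), ⟨e⟩⟩

lemma exists_ge (n : ℤ) {X : 𝓕} (hX : X ∈ Ft.ge (n + 1)) :
    ∃ X₀ ∈ Ft.ge n, Nonempty (Ft.s.obj X₀ ≅ X) := by
  obtain ⟨X₀, ⟨e⟩⟩ := Ft.exists_iso X
  exact ⟨X₀, (Ft.s_ge _ _).2 ((Ft.sub_ge _).isoClosed e.symm hX), ⟨e⟩⟩

lemma hom_zero (n : ℤ) : ∀ X ∈ Ft.ge (n + 1), ∀ Y ∈ Ft.le n, ∀ f : X ⟶ Y, f = 0 := by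
  have := Ft.s_equiv
  let := Ft.s_comm
  have : Ft.s.IsTriangulated := Ft.s_triang
  refine int_iff (p := fun n => ∀ X ∈ Ft.ge (n + 1), ∀ Y ∈ Ft.le n, ∀ f : X ⟶ Y, f = 0) ?_ ?_ n
  · simpa using Ft.fcat3
  · intro n
    constructor
    · intro h X hX Y hY f
      obtain ⟨X₀, hX₀, ⟨e⟩⟩ := Ft.exists_ge _ hX
      obtain ⟨Y₀, hY₀, ⟨e'⟩⟩ := Ft.exists_le _ hY
      have h1 := h X₀ hX₀ Y₀ hY₀ (Ft.s.preimage (e.hom ≫ f ≫ e'.inv))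
      have h2 : e.hom ≫ f ≫ e'.inv = 0 := by
        rw [← Ft.s.map_preimage (e.hom ≫ f ≫ e'.inv), h1, Functor.map_zero]
      have h3 : f = e.inv ≫ (e.hom ≫ f ≫ e'.inv) ≫ e'.hom := by simp
      rw [h3, h2, zero_comp, comp_zero]
    · intro h X hX Y hY f
      apply Ft.s.map_injective
      rw [Functor.map_zero]
      exact h _ ((Ft.s_ge _ _).1 hX) _ ((Ft.s_le _ _).1 hY) _

lemma exists_trunc (n : ℤ) : ∀ X : 𝓕, ∃ A ∈ Ft.ge (n + 1), ∃ B ∈ Ft.le n, Dist A X B := by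
  have := Ft.s_equiv
  refine int_iff (p := fun n => ∀ X : 𝓕, ∃ A ∈ Ft.ge (n + 1), ∃ B ∈ Ft.le n, Dist A X B) ?_ ?_ n
  · intro X
    obtain ⟨A, B, hA, hB, f, g, h, hT⟩ := Ft.fcat4 X
    exact ⟨A, by simpa using hA, B, hB, f, g, h, hT⟩
  · intro n
    constructor
    · intro h X
      obtain ⟨X₀, ⟨e⟩⟩ := Ft.exists_iso X
      obtain ⟨A, hA, B, hB, hD⟩ := h X₀
      exact ⟨_, (Ft.s_ge _ _).1 hA, _, (Ft.s_le _ _).1 hB,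
        (Ft.dist_map hD).of_iso (Iso.refl _) e (Iso.refl _)⟩
    · intro h X
      obtain ⟨A, hA, B, hB, hD⟩ := h (Ft.s.obj X)
      obtain ⟨A₀, hA₀, ⟨e⟩⟩ := Ft.exists_ge _ hA
      obtain ⟨B₀, hB₀, ⟨e'⟩⟩ := Ft.exists_le _ hB
      exact ⟨A₀, hA₀, B₀, hB₀, Ft.dist_of_map (hD.of_iso e.symm (Iso.refl _) e'.symm)⟩

lemma le_succ (n : ℤ) : Ft.le n ⊆ Ft.le (n + 1) := by
  refine int_iff (p := fun n => Ft.le n ⊆ Ft.le (n + 1)) ?_ ?_ n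
  · simpa using Ft.fcat1_le
  · intro n
    constructor
    · intro h X hX
      obtain ⟨X₀, hX₀, ⟨e⟩⟩ := Ft.exists_le _ hX
      exact (Ft.sub_le _).isoClosed e ((Ft.s_le _ _).1 (h hX₀))
    · intro h X hX
      exact (Ft.s_le _ _).2 (h ((Ft.s_le _ _).1 hX))

lemma ge_succ (n : ℤ) : Ft.ge (n + 1) ⊆ Ft.ge n := by
  refine int_iff (p := fun n => Ft.ge (n + 1) ⊆ Ft.ge n) ?_ ?_ n
  · simpa using Ft.fcat1_ge
  · intro n
    constructor
    · intro h X hX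
      obtain ⟨X₀, hX₀, ⟨e⟩⟩ := Ft.exists_ge _ hX
      exact (Ft.sub_ge _).isoClosed e ((Ft.s_ge _ _).1 (h hX₀))
    · intro h X hX
      exact (Ft.s_ge _ _).2 (h ((Ft.s_ge _ _).1 hX))

lemma le_mono : Monotone Ft.le := monotone_int_of_le_succ Ft.le_succ

lemma ge_anti : Antitone Ft.ge := antitone_int_of_succ_le Ft.ge_succ

/-- `G` is a model for `grⁿ X`. -/
def GrIs (n : ℤ) (X G : 𝓕) : Prop :=
  ∃ A ∈ Ft.ge n, ∃ B ∈ Ft.le (n - 1), ∃ A' ∈ Ft.ge (n + 1), G ∈ Ft.le n ∧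
    Dist A X B ∧ Dist A' A G

lemma grCond_iff (S : Set 𝓕) (n : ℤ) (X : 𝓕) :
    GrCond Ft S n X ↔ ∃ G, Ft.GrIs n X G ∧ G ∈ SS Ft.s S n := by
  constructor
  · rintro ⟨A, B, A', G', f, g, h, f', g', h', hA, hB, hA', hG', hT, hT', hW⟩
    exact ⟨G', ⟨A, hA, B, hB, A', hA', hG', ⟨f, g, h, hT⟩, ⟨f', g', h', hT'⟩⟩, hW⟩
  · rintro ⟨G', ⟨A, hA, B, hB, A', hA', hG', ⟨f, g, h, hT⟩, ⟨f', g', h', hT'⟩⟩, hW⟩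
    exact ⟨A, B, A', G', f, g, h, f', g', h', hA, hB, hA', hG', hT, hT', hW⟩

lemma exists_gr (n : ℤ) (X : 𝓕) : ∃ G, Ft.GrIs n X G := by
  obtain ⟨A, hA, B, hB, h⟩ := Ft.exists_trunc (n - 1) X
  obtain ⟨A', hA', G, hG, h'⟩ := Ft.exists_trunc n A
  exact ⟨G, A, by simpa using hA, B, hB, A', hA', hG, h, h'⟩

lemma gr_dist {n : ℤ} {X₁ X₂ X₃ G₁ G₂ G₃ : 𝓕} (hX : Dist X₁ X₂ X₃) (h₁ : Ft.GrIs n X₁ G₁)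
    (h₂ : Ft.GrIs n X₂ G₂) (h₃ : Ft.GrIs n X₃ G₃) : Dist G₁ G₂ G₃ := by
  obtain ⟨A₁, hA₁, B₁, hB₁, A₁', hA₁', hG₁, d₁, d₁'⟩ := h₁
  obtain ⟨A₂, hA₂, B₂, hB₂, A₂', hA₂', hG₂, d₂, d₂'⟩ := h₂
  obtain ⟨A₃, hA₃, B₃, hB₃, A₃', hA₃', hG₃, d₃, d₃'⟩ := h₃
  have h0 : ∀ X ∈ Ft.ge n, ∀ Y ∈ Ft.le (n - 1), ∀ f : X ⟶ Y, f = 0 := by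
    simpa using Ft.hom_zero (n - 1)
  have hA := trunc_left (Ft.sub_ge n) (Ft.sub_le (n - 1)) h0 hX d₁ d₂ d₃ hA₁ hA₂ hA₃ hB₁ hB₂ hB₃
  exact trunc_right (Ft.sub_ge (n + 1)) (Ft.sub_le n) (Ft.hom_zero n) hA d₁' d₂' d₃'
    hA₁' hA₂' hA₃' hG₁ hG₂ hG₃

lemma gr_zero_of_le {n m : ℤ} (h : m < n) {X Z : 𝓕} (hX : X ∈ Ft.le m) (hZ : IsZero Z) :
    Ft.GrIs n X Z :=
  ⟨Z, (Ft.sub_ge _).zero _ hZ, X, Ft.le_mono (by omega) hX, Z, (Ft.sub_ge _).zero _ hZ,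
    (Ft.sub_le _).zero _ hZ, Dist.id_right hZ, Dist.id_left hZ⟩

lemma gr_zero_of_ge {n m : ℤ} (h : n < m) {X Z : 𝓕} (hX : X ∈ Ft.ge m) (hZ : IsZero Z) :
    Ft.GrIs n X Z :=
  ⟨X, Ft.ge_anti (by omega) hX, Z, (Ft.sub_le _).zero _ hZ, X, Ft.ge_anti (by omega) hX,
    (Ft.sub_le _).zero _ hZ, Dist.id_left hZ, Dist.id_left hZ⟩

lemma gr_self {n : ℤ} {X : 𝓕} (h : X ∈ Ft.le n) (h' : X ∈ Ft.ge n) : Ft.GrIs n X X :=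
  ⟨X, h', _, (Ft.sub_le _).zero _ (isZero_zero 𝓕), _, (Ft.sub_ge _).zero _ (isZero_zero 𝓕), h,
    Dist.id_left (isZero_zero 𝓕), Dist.id_right (isZero_zero 𝓕)⟩

lemma gr_zero {n : ℤ} {X Z : 𝓕} (hX : IsZero X) (hZ : IsZero Z) : Ft.GrIs n X Z :=
  Ft.gr_zero_of_le (m := n - 1) (by omega) ((Ft.sub_le _).zero _ hX) hZ

lemma gr_unique {n : ℤ} {X G G' : 𝓕} (h : Ft.GrIs n X G) (h' : Ft.GrIs n X G') :
    Nonempty (G ≅ G') :=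
  (Ft.gr_dist (Dist.id_right (isZero_zero 𝓕)) (Ft.gr_zero (isZero_zero 𝓕) (isZero_zero 𝓕))
    h h').iso_right (isZero_zero 𝓕)

lemma gr_s {n : ℤ} {X G : 𝓕} (h : Ft.GrIs n X G) : Ft.GrIs (n + 1) (Ft.s.obj X) (Ft.s.obj G) := by
  obtain ⟨A, hA, B, hB, A', hA', hG, d, d'⟩ := h
  refine ⟨_, (Ft.s_ge _ _).1 hA, _, ?_, _, (Ft.s_ge _ _).1 hA', (Ft.s_le _ _).1 hG,
    Ft.dist_map d, Ft.dist_map d'⟩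
  have := (Ft.s_le _ _).1 hB
  rwa [show n - 1 + 1 = n + 1 - 1 by omega] at this

lemma gr_shift {n : ℤ} {X G : 𝓕} (h : Ft.GrIs n X G) (m : ℤ) : Ft.GrIs n (X⟦m⟧) (G⟦m⟧) := by
  obtain ⟨A, hA, B, hB, A', hA', hG, d, d'⟩ := h
  exact ⟨_, (Ft.sub_ge _).shift m _ hA, _, (Ft.sub_le _).shift m _ hB, _,
    (Ft.sub_ge _).shift m _ hA', (Ft.sub_le _).shift m _ hG, d.shift m, d'.shift m⟩

variable {S : Set 𝓕} (hS : IsTriangulatedSub S)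

lemma sub_SS (hS : IsTriangulatedSub S) (n : ℤ) : IsTriangulatedSub (SS Ft.s S n) := by
  let := Ft.s_comm
  have : Ft.s.IsTriangulated := Ft.s_triang
  have := Ft.s_equiv
  exact SS_isTriangulatedSub Ft.s hS n

lemma grCond_iff' (hS : IsTriangulatedSub S) {n : ℤ} {X G : 𝓕} (h : Ft.GrIs n X G) :
    GrCond Ft S n X ↔ G ∈ SS Ft.s S n := by
  rw [grCond_iff]
  constructor
  · rintro ⟨G', h', hG'⟩
    obtain ⟨e⟩ := Ft.gr_unique h' h
    exact (Ft.sub_SS hS n).isoClosed e hG'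
  · exact fun hG => ⟨G, h, hG⟩

lemma grCond_of_zero (hS : IsTriangulatedSub S) {n : ℤ} {X Z : 𝓕} (hZ : IsZero Z)
    (h : Ft.GrIs n X Z) : GrCond Ft S n X :=
  (Ft.grCond_iff' hS h).2 ((Ft.sub_SS hS n).zero _ hZ)

lemma grCond_ext (hS : IsTriangulatedSub S) {n : ℤ} {X Y Z : 𝓕} (h : Dist X Y Z)
    (hX : GrCond Ft S n X) (hZ : GrCond Ft S n Z) : GrCond Ft S n Y := by
  obtain ⟨G₁, h₁⟩ := Ft.exists_gr n X
  obtain ⟨G₂, h₂⟩ := Ft.exists_gr n Y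
  obtain ⟨G₃, h₃⟩ := Ft.exists_gr n Z
  rw [Ft.grCond_iff' hS h₁] at hX
  rw [Ft.grCond_iff' hS h₃] at hZ
  rw [Ft.grCond_iff' hS h₂]
  exact (Ft.sub_SS hS n).mem₂ (Ft.gr_dist h h₁ h₂ h₃) hX hZ

lemma grCond_s (hS : IsTriangulatedSub S) (n : ℤ) (X : 𝓕) :
    GrCond Ft S n X ↔ GrCond Ft S (n + 1) (Ft.s.obj X) := by
  have := Ft.s_equiv
  obtain ⟨G, h⟩ := Ft.exists_gr n X
  rw [Ft.grCond_iff' hS h, Ft.grCond_iff' hS (Ft.gr_s h)]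
  exact mem_SS_succ hS n G

lemma grCond_shift (hS : IsTriangulatedSub S) {n : ℤ} {X : 𝓕} (h : GrCond Ft S n X) (m : ℤ) :
    GrCond Ft S n (X⟦m⟧) := by
  obtain ⟨G, hG⟩ := Ft.exists_gr n X
  rw [Ft.grCond_iff' hS hG] at h
  rw [Ft.grCond_iff' hS (Ft.gr_shift hG m)]
  exact (Ft.sub_SS hS n).shift m _ h

lemma sub_G (hS : IsTriangulatedSub S) : IsTriangulatedSub {X : 𝓕 | ∀ n : ℤ, GrCond Ft S n X} where
  zero X hX n := Ft.grCond_of_zero hS hX (Ft.gr_zero hX hX)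
  isoClosed {X Y} e hX n :=
    Ft.grCond_ext hS ((Dist.id_left (isZero_zero 𝓕)).of_iso (Iso.refl X) e (Iso.refl _)) (hX n)
      (Ft.grCond_of_zero hS (isZero_zero 𝓕) (Ft.gr_zero (isZero_zero 𝓕) (isZero_zero 𝓕)))
  shift m X hX n := Ft.grCond_shift hS (hX n) m
  ext₂ T hT h1 h3 n := Ft.grCond_ext hS (Dist.of_mem hT) (h1 n) (h3 n)

end FilteredTriangulated

/-- Proposition 4.3: if `𝓕` is a filtered enhancement of
`T = 𝓕(≤0) ∩ 𝓕(≥0)` and `S` is a full triangulated subcategory of `T`, then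
`G = { X | s^{-n} grⁿ(X) ∈ S for all n }` is a full triangulated subcategory of `𝓕`,
closed under `s` and `s⁻¹`, which — with the subcategories `G ∩ 𝓕(≤n)`, `G ∩ 𝓕(≥n)`
and the restrictions of `s` and `α` — is a filtered triangulated category (the only
axiom that does not restrict trivially being fcat4) with `G(≤0) ∩ G(≥0) = S`; that is,
`G` is a filtered enhancement of `S`. -/
theorem filtered_enhancement_of_subcategory (Ft : FilteredTriangulated 𝓕)
    (S : Set 𝓕) (hS : IsTriangulatedSub S) (hsub : S ⊆ Ft.le 0 ∩ Ft.ge 0) :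
    IsTriangulatedSub {X : 𝓕 | ∀ n : ℤ, GrCond Ft S n X} ∧
    (∀ X : 𝓕, (∀ n : ℤ, GrCond Ft S n X) ↔ (∀ n : ℤ, GrCond Ft S n (Ft.s.obj X))) ∧
    (∀ X : 𝓕, (∀ n : ℤ, GrCond Ft S n X) →
      ∃ (A B : 𝓕) (_ : A ∈ Ft.ge 1 ∧ ∀ n : ℤ, GrCond Ft S n A)
        (_ : B ∈ Ft.le 0 ∧ ∀ n : ℤ, GrCond Ft S n B)
        (f : A ⟶ X) (g : X ⟶ B) (h : B ⟶ A⟦(1:ℤ)⟧),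
        Triangle.mk f g h ∈ distTriang 𝓕) ∧
    ({X : 𝓕 | ∀ n : ℤ, GrCond Ft S n X} ∩ (Ft.le 0 ∩ Ft.ge 0) = S) := by
  refine ⟨Ft.sub_G hS, ?_, ?_, ?_⟩
  · intro X
    constructor
    · intro h n
      have := (Ft.grCond_s hS (n - 1) X).1 (h _)
      rwa [sub_add_cancel] at this
    · intro h n
      exact (Ft.grCond_s hS n X).2 (h _)
  · intro X hX
    obtain ⟨A, B, hA, hB, f, g, h, hT⟩ := Ft.fcat4 X
    have hD : Dist A X B := ⟨f, g, h, hT⟩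
    have key : ∀ n : ℤ, GrCond Ft S n A ∧ GrCond Ft S n B := by
      intro n
      rcases le_or_gt n 0 with hn | hn
      · have hA' : GrCond Ft S n A :=
          Ft.grCond_of_zero hS (isZero_zero 𝓕)
            (Ft.gr_zero_of_ge (by omega) hA (isZero_zero 𝓕))
        exact ⟨hA', Ft.grCond_ext hS hD.rotate (hX n) (Ft.grCond_shift hS hA' 1)⟩
      · have hB' : GrCond Ft S n B :=
          Ft.grCond_of_zero hS (isZero_zero 𝓕)
            (Ft.gr_zero_of_le (by omega) hB (isZero_zero 𝓕))
        exact ⟨Ft.grCond_ext hS hD.invRotate (Ft.grCond_shift hS hB' (-1)) (hX n), hB'⟩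
    exact ⟨A, B, ⟨hA, fun n => (key n).1⟩, ⟨hB, fun n => (key n).2⟩, f, g, h, hT⟩
  · ext X
    constructor
    · rintro ⟨hX, hle, hge⟩
      exact (mem_SS_zero hS X).1 ((Ft.grCond_iff' hS (Ft.gr_self hle hge)).1 (hX 0))
    · intro hX
      obtain ⟨hle, hge⟩ := hsub hX
      refine ⟨fun n => ?_, hle, hge⟩
      rcases lt_trichotomy n 0 with hn | rfl | hn
      · exact Ft.grCond_of_zero hS (isZero_zero 𝓕)
          (Ft.gr_zero_of_ge hn hge (isZero_zero 𝓕))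
      · exact (Ft.grCond_iff' hS (Ft.gr_self hle hge)).2 ((mem_SS_zero hS X).2 hX)
      · exact Ft.grCond_of_zero hS (isZero_zero 𝓕)
          (Ft.gr_zero_of_le hn hle (isZero_zero 𝓕))

end Paper
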